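/- arXiv:2503.02406 — 3 statements merged into one kernel-verified Lean document; each statement's English description precedes it below -/
import Mathlib

section
/- Let n ≥ 0, s ≥ 0 and ψ ∈ [0,π]. Suppose γ : ℝ → ℂ^{n+1} is a smooth curve satisfying the linear ODE γ''(t) − i·s·γ'(t) + (1 − s·cos ψ)·γ(t) = 0 for all t ∈ ℝ, together with the initial conditions |γ(0)| = 1, |γ'(0)| = 1, Re⟨γ(0), γ'(0)⟩ = 0 and Re⟨i·γ(0), γ'(0)⟩ = cos ψ. Then for every t ∈ ℝ one has |γ(t)| = 1, |γ'(t)| = 1, Re⟨γ(t), γ'(t)⟩ = 0 and Re⟨i·γ(t), γ'(t)⟩ = cos ψ; that is, the curve stays on the unit sphere, the speed and the contact angle ψ are integrals of motion. -/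
noncomputable section

open scoped Real

/-- Hermitian product on `ℂ^{n+1}`, ℂ-linear in the first argument and
conjugate-linear in the second (paper convention). -/
def herm {n : ℕ} (x y : EuclideanSpace ℂ (Fin (n + 1))) : ℂ := inner ℂ y x

/-- Norm of the point `C_s(ψ) = (−s/2 + cos ψ, sin ψ) ∈ ℝ²`, i.e.
`|C_s(ψ)| = sqrt(s²/4 + 1 − s cos ψ)`. -/
def normC (s ψ : ℝ) : ℝ := Real.sqrt (s ^ 2 / 4 + 1 - s * Real.cos ψ)

/-- Angle of `C_s(ψ)` with the positive x-axis: the unique `τ ∈ [0,π]` with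
`cos τ = (−s/2 + cos ψ)/|C_s(ψ)|`. -/
def argC (s ψ : ℝ) : ℝ := Real.arccos ((-s / 2 + Real.cos ψ) / normC s ψ)

/-- `γ` is a unit-speed magnetic geodesic of strength `s` with contact angle `ψ`,
in the paper's ambient-space formulation: `γ'' − i·s·γ' + (1 − s·cos ψ)·γ = 0`,
`|γ(0)| = 1`, `|γ'(0)| = 1`, `Re⟨γ(0),γ'(0)⟩ = 0`, `Re⟨i·γ(0),γ'(0)⟩ = cos ψ`. -/
def IsMagGeo {n : ℕ} (s ψ : ℝ) (γ : ℝ → EuclideanSpace ℂ (Fin (n + 1))) : Prop :=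
  ContDiff ℝ (⊤ : ℕ∞) γ ∧
  (∀ t : ℝ, deriv (deriv γ) t - ((s : ℂ) * Complex.I) • deriv γ t
      + ((1 : ℂ) - (s : ℂ) * (Real.cos ψ : ℂ)) • γ t = 0) ∧
  ‖γ 0‖ = 1 ∧ ‖deriv γ 0‖ = 1 ∧ (herm (γ 0) (deriv γ 0)).re = 0 ∧
  (herm (Complex.I • γ 0) (deriv γ 0)).re = Real.cos ψ

/-- The curve `γ(t) = e^{i s t/2}(e^{−i|C_s(ψ)|t} w₀ + e^{i|C_s(ψ)|t} w₁)`. -/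
def magCurve {n : ℕ} (s ψ : ℝ) (w₀ w₁ : EuclideanSpace ℂ (Fin (n + 1))) (t : ℝ) :
    EuclideanSpace ℂ (Fin (n + 1)) :=
  Complex.exp (Complex.I * s * t / 2) •
    (Complex.exp (-(Complex.I * normC s ψ * t)) • w₀ +
     Complex.exp (Complex.I * normC s ψ * t) • w₁)

/-- The Clifford torus `𝕋²_{w₀,w₁} = {λ₀ w₀ + λ₁ w₁ : |λ₀| = |λ₁| = 1}`. -/
def cliffordTorus {n : ℕ} (w₀ w₁ : EuclideanSpace ℂ (Fin (n + 1))) :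
    Set (EuclideanSpace ℂ (Fin (n + 1))) :=
  {x | ∃ l₀ l₁ : ℂ, ‖l₀‖ = 1 ∧ ‖l₁‖ = 1 ∧ x = l₀ • w₀ + l₁ • w₁}

/-!
The real quantities `A = ‖γ‖²`, `B = ‖γ'‖²`, `R = Re⟨γ, γ'⟩` and `Q = Re⟨iγ, γ'⟩` of a solution
of `γ'' = i s γ' - k γ` satisfy the closed linear system `A' = 2R`, `B' = -2kR`, `Q' = sR`,
`R' = B - sQ - kA`, so that `R'' = -(s² + 4k) R`. The initial conditions, with
`k = 1 - s cos ψ`, make `R` and `R'` vanish at time `0`; by uniqueness `R` vanishes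
identically, and then `A`, `B` and `Q` are constant.
-/

open Complex (I I_mul_I)

section LinearODE

variable {E : Type*} [NormedAddCommGroup E] [NormedSpace ℝ E]

lemma eq_of_hasDerivAt_zero {f : ℝ → E} (hf : ∀ t, HasDerivAt f 0 t) (t t₀ : ℝ) : f t = f t₀ :=
  is_const_of_deriv_eq_zero (fun t => (hf t).differentiableAt) (fun t => (hf t).deriv) t t₀

lemma eq_zero_of_hasDerivAt_continuousLinearMap (A : E →L[ℝ] E) {x : ℝ → E} {t₀ : ℝ}
    (hx : ∀ t, HasDerivAt x (A (x t)) t) (hx₀ : x t₀ = 0) : x = 0 :=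
  ODE_solution_unique_univ (v := fun _ => A) (s := fun _ => Set.univ) (t₀ := t₀)
    (fun _ => A.lipschitz.lipschitzOnWith) (fun t => ⟨hx t, Set.mem_univ _⟩)
    (fun t => ⟨by simp, Set.mem_univ _⟩) hx₀

lemma eq_zero_of_hasDerivAt_of_hasDerivAt_smul {x y : ℝ → E} {c t₀ : ℝ}
    (hx : ∀ t, HasDerivAt x (y t) t) (hy : ∀ t, HasDerivAt y (c • x t) t)
    (hx₀ : x t₀ = 0) (hy₀ : y t₀ = 0) (t : ℝ) : x t = 0 := by
  let A : E × E →L[ℝ] E × E :=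
    (ContinuousLinearMap.snd ℝ E E).prod (c • ContinuousLinearMap.fst ℝ E E)
  have hxy : (fun τ => (x τ, y τ)) = 0 :=
    eq_zero_of_hasDerivAt_continuousLinearMap A (fun τ => (hx τ).prodMk (hy τ))
      (Prod.ext hx₀ hy₀)
  exact congrArg Prod.fst (congrFun hxy t)

end LinearODE

section MagneticOscillator

variable {E : Type*} [NormedAddCommGroup E] [InnerProductSpace ℂ E]

lemma re_inner_comm (x y : E) : (inner ℂ x y).re = (inner ℂ y x).re :=
  inner_re_symm (𝕜 := ℂ) x y

lemma re_inner_self_eq_norm_sq (x : E) : (inner ℂ x x).re = ‖x‖ ^ 2 :=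
  inner_self_eq_norm_sq (𝕜 := ℂ) x

lemma re_inner_I_smul_self (x : E) : (inner ℂ x (I • x)).re = 0 :=
  real_inner_I_smul_self ℂ x

lemma re_inner_mul_I_smul_sub_smul_left (a b : ℝ) (x y z : E) :
    (inner ℂ (((a : ℂ) * I) • x - (b : ℂ) • y) z).re =
      -a * (inner ℂ x (I • z)).re - b * (inner ℂ y z).re := by
  rw [inner_sub_left, inner_smul_left, inner_smul_left, inner_smul_right]
  simp [mul_comm]

lemma hasDerivAt_re_inner {f g : ℝ → E} {f' g' : E} {t : ℝ} (hf : HasDerivAt f f' t)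
    (hg : HasDerivAt g g' t) :
    HasDerivAt (fun τ => (inner ℂ (f τ) (g τ)).re)
      ((inner ℂ (f t) g').re + (inner ℂ f' (g t)).re) t :=
  Complex.reCLM.hasFDerivAt.comp_hasDerivAt t (hf.inner ℂ hg)

lemma hasDerivAt_norm_sq_of_complex {f : ℝ → E} {f' : E} {t : ℝ} (hf : HasDerivAt f f' t) :
    HasDerivAt (fun τ => ‖f τ‖ ^ 2) (2 * (inner ℂ f' (f t)).re) t := by
  simp only [← re_inner_self_eq_norm_sq]
  refine (hasDerivAt_re_inner hf hf).congr_deriv ?_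
  rw [re_inner_comm (f t), two_mul]

/-- The curve `γ`, with velocity `v`, is the trajectory of a charged harmonic oscillator
`γ'' = i s γ' - k γ` in a constant magnetic field of strength `s`, with spring constant `k`
of either sign. Magnetic geodesics of the unit sphere with contact angle `ψ` have
`k = 1 - s cos ψ`. The velocity is a separate argument so that differentiability is part of the
notion. -/
structure IsMagneticOscillator (s k : ℝ) (γ v : ℝ → E) : Prop where
  hasDerivAt_position : ∀ t, HasDerivAt γ (v t) t
  hasDerivAt_velocity : ∀ t, HasDerivAt v (((s : ℂ) * I) • v t - (k : ℂ) • γ t) t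

namespace IsMagneticOscillator

variable {s k : ℝ} {γ v : ℝ → E}

lemma of_contDiff (hγ : ContDiff ℝ 2 γ)
    (hode : ∀ t, deriv (deriv γ) t - ((s : ℂ) * I) • deriv γ t + (k : ℂ) • γ t = 0) :
    IsMagneticOscillator s k γ (deriv γ) where
  hasDerivAt_position t := (hγ.differentiable two_ne_zero t).hasDerivAt
  hasDerivAt_velocity t := by
    rw [← sub_eq_zero.mp ((sub_add _ _ _).symm.trans (hode t))]
    exact (hγ.differentiable_deriv_two t).hasDerivAt

lemma hasDerivAt_norm_sq_position (h : IsMagneticOscillator s k γ v) (t : ℝ) :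
    HasDerivAt (fun τ => ‖γ τ‖ ^ 2) (2 * (inner ℂ (v t) (γ t)).re) t :=
  hasDerivAt_norm_sq_of_complex (h.hasDerivAt_position t)

lemma hasDerivAt_norm_sq_velocity (h : IsMagneticOscillator s k γ v) (t : ℝ) :
    HasDerivAt (fun τ => ‖v τ‖ ^ 2) (-2 * k * (inner ℂ (v t) (γ t)).re) t := by
  refine (hasDerivAt_norm_sq_of_complex (h.hasDerivAt_velocity t)).congr_deriv ?_
  rw [re_inner_mul_I_smul_sub_smul_left, re_inner_I_smul_self, re_inner_comm (γ t)]
  ring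

lemma hasDerivAt_re_inner_velocity_position (h : IsMagneticOscillator s k γ v) (t : ℝ) :
    HasDerivAt (fun τ => (inner ℂ (v τ) (γ τ)).re)
      (‖v t‖ ^ 2 - s * (inner ℂ (v t) (I • γ t)).re - k * ‖γ t‖ ^ 2) t := by
  refine (hasDerivAt_re_inner (h.hasDerivAt_velocity t)
    (h.hasDerivAt_position t)).congr_deriv ?_
  rw [re_inner_mul_I_smul_sub_smul_left, re_inner_self_eq_norm_sq, re_inner_self_eq_norm_sq]
  ring

lemma hasDerivAt_re_inner_velocity_I_smul_position (h : IsMagneticOscillator s k γ v) (t : ℝ) :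
    HasDerivAt (fun τ => (inner ℂ (v τ) (I • γ τ)).re) (s * (inner ℂ (v t) (γ t)).re) t := by
  refine (hasDerivAt_re_inner (h.hasDerivAt_velocity t)
    ((h.hasDerivAt_position t).const_smul I)).congr_deriv ?_
  rw [Pi.smul_apply, re_inner_mul_I_smul_sub_smul_left, re_inner_I_smul_self, re_inner_I_smul_self,
    smul_smul, I_mul_I, neg_one_smul, inner_neg_right, Complex.neg_re]
  ring

lemma re_inner_velocity_position_eq_zero (h : IsMagneticOscillator s k γ v) {t₀ : ℝ}
    (horth : (inner ℂ (v t₀) (γ t₀)).re = 0)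
    (hbal : ‖v t₀‖ ^ 2 = s * (inner ℂ (v t₀) (I • γ t₀)).re + k * ‖γ t₀‖ ^ 2) (t : ℝ) :
    (inner ℂ (v t) (γ t)).re = 0 := by
  refine eq_zero_of_hasDerivAt_of_hasDerivAt_smul (c := -(s ^ 2 + 4 * k))
    h.hasDerivAt_re_inner_velocity_position (fun τ => ?_) horth (by linarith) t
  refine (((h.hasDerivAt_norm_sq_velocity τ).sub
    ((h.hasDerivAt_re_inner_velocity_I_smul_position τ).const_mul s)).sub
    ((h.hasDerivAt_norm_sq_position τ).const_mul k)).congr_deriv ?_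
  rw [smul_eq_mul]
  ring

end IsMagneticOscillator

theorem stmt_0_general {s k : ℝ} {γ v : ℝ → E} (h : IsMagneticOscillator s k γ v) {t₀ : ℝ}
    (horth : (inner ℂ (v t₀) (γ t₀)).re = 0)
    (hbal : ‖v t₀‖ ^ 2 = s * (inner ℂ (v t₀) (I • γ t₀)).re + k * ‖γ t₀‖ ^ 2) (t : ℝ) :
    ‖γ t‖ = ‖γ t₀‖ ∧ ‖v t‖ = ‖v t₀‖ ∧ (inner ℂ (v t) (γ t)).re = 0 ∧
      (inner ℂ (v t) (I • γ t)).re = (inner ℂ (v t₀) (I • γ t₀)).re := by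
  have hR : ∀ τ, (inner ℂ (v τ) (γ τ)).re = 0 := h.re_inner_velocity_position_eq_zero horth hbal
  have hposition : ‖γ t‖ ^ 2 = ‖γ t₀‖ ^ 2 := eq_of_hasDerivAt_zero
    (fun τ => by simpa only [hR τ, mul_zero] using h.hasDerivAt_norm_sq_position τ) t t₀
  have hvelocity : ‖v t‖ ^ 2 = ‖v t₀‖ ^ 2 := eq_of_hasDerivAt_zero
    (fun τ => by simpa only [hR τ, mul_zero] using h.hasDerivAt_norm_sq_velocity τ) t t₀
  have hangle : (inner ℂ (v t) (I • γ t)).re = (inner ℂ (v t₀) (I • γ t₀)).re :=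
    eq_of_hasDerivAt_zero (fun τ => by
      simpa only [hR τ, mul_zero] using h.hasDerivAt_re_inner_velocity_I_smul_position τ) t t₀
  exact ⟨(sq_eq_sq₀ (norm_nonneg _) (norm_nonneg _)).mp hposition,
    (sq_eq_sq₀ (norm_nonneg _) (norm_nonneg _)).mp hvelocity, hR t, hangle⟩

end MagneticOscillator

/-- along a solution of the ambient-space magnetic geodesic ODE with
unit initial data, the norm, the speed, orthogonality of position and velocity
and the contact angle are all conserved. -/
theorem stmt_0 {n : ℕ} (s ψ : ℝ) (hs : 0 ≤ s) (hψ : ψ ∈ Set.Icc 0 π)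
    (γ : ℝ → EuclideanSpace ℂ (Fin (n + 1)))
    (hsmooth : ContDiff ℝ (⊤ : ℕ∞) γ)
    (hode : ∀ t : ℝ, deriv (deriv γ) t - ((s : ℂ) * Complex.I) • deriv γ t
      + ((1 : ℂ) - (s : ℂ) * (Real.cos ψ : ℂ)) • γ t = 0)
    (h0 : ‖γ 0‖ = 1) (h1 : ‖deriv γ 0‖ = 1)
    (h2 : (herm (γ 0) (deriv γ 0)).re = 0)
    (h3 : (herm (Complex.I • γ 0) (deriv γ 0)).re = Real.cos ψ) :
    ∀ t : ℝ, ‖γ t‖ = 1 ∧ ‖deriv γ t‖ = 1 ∧ (herm (γ t) (deriv γ t)).re = 0 ∧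
      (herm (Complex.I • γ t) (deriv γ t)).re = Real.cos ψ := by
  have h := IsMagneticOscillator.of_contDiff (k := 1 - s * Real.cos ψ)
    (contDiff_infty.mp hsmooth 2) (by simpa using hode)
  simp only [herm] at h2 h3 ⊢
  intro t
  simpa only [h0, h1, h3] using stmt_0_general h h2 (by rw [h0, h1, h3]; ring) t
end
end

section
/- Let n ≥ 0, s ≥ 0 and ψ ∈ [0,π] with (s,ψ) ≠ (2,0). Let (w₀,w₁) be an admissible pair in ℂ^{n+1} with |w₁|² − |w₀|² = cos(Arg(C_s(ψ))) (equivalently, the Clifford torus 𝕋²_{w₀,w₁} has width Arg(C_s(ψ)) up to the identification τ ∼ π − τ). Then the curve γ(t) := e^{i s t/2}·(e^{−i|C_s(ψ)|t}·w₀ + e^{i|C_s(ψ)|t}·w₁) is a unit-speed magnetic geodesic of strength s with contact angle ψ, i.e. it satisfies γ''(t) − i·s·γ'(t) + (1 − s·cos ψ)·γ(t) = 0 for all t, |γ(0)| = 1, |γ'(0)| = 1, Re⟨γ(0),γ'(0)⟩ = 0, Re⟨i·γ(0),γ'(0)⟩ = cos ψ; moreover γ(t) ∈ 𝕋²_{w₀,w₁}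 for every t ∈ ℝ. -/
noncomputable section

open scoped Real

/-!
The curve rotates `w₀` and `w₁` with the two frequencies `a = s/2 - |C|` and `b = s/2 + |C|`.
Any such two-frequency curve solves `γ'' - i(a + b)γ' - abγ = 0`, and here `a + b = s` and
`ab = s cos ψ - 1`. The cosine of the contact angle is the mean frequency `a|w₀|² + b|w₁|²`, which
the width condition makes equal to `cos ψ`. Unit speed is then automatic:
`a²|w₀|² + b²|w₁|² = (a + b)(a|w₀|² + b|w₁|²) - ab = 1`.
-/

section TwoFrequencyCurve

open Complex ContDiff

variable {E : Type*} [NormedAddCommGroup E] [InnerProductSpace ℂ E]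

/-- `IsMagGeo` in an arbitrary complex inner product space: a unit-speed magnetic geodesic of
strength `s` with contact angle `ψ` on the unit sphere. As Mathlib's inner product is
conjugate-linear in the first argument, the paper's `⟨x, y⟩` is `inner ℂ y x`. -/
structure IsMagneticGeodesic (s ψ : ℝ) (γ : ℝ → E) : Prop where
  contDiff : ContDiff ℝ ∞ γ
  equation (t : ℝ) : deriv (deriv γ) t - ((s : ℂ) * I) • deriv γ t
    + ((1 : ℂ) - (s : ℂ) * (Real.cos ψ : ℂ)) • γ t = 0
  norm_zero : ‖γ 0‖ = 1
  norm_deriv_zero : ‖deriv γ 0‖ = 1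
  re_inner_deriv_zero : (inner ℂ (deriv γ 0) (γ 0)).re = 0
  re_inner_deriv_zero_I_smul : (inner ℂ (deriv γ 0) (I • γ 0)).re = Real.cos ψ

/-- The curve `e^{iat} u + e^{ibt} v`, on which `u` and `v` rotate with the real angular
frequencies `a` and `b`. -/
def twoFrequencyCurve (a b : ℝ) (u v : E) (t : ℝ) : E :=
  exp (a * I * t) • u + exp (b * I * t) • v

namespace twoFrequencyCurve

variable (a b : ℝ) (u v : E)

@[simp]
theorem apply_zero : twoFrequencyCurve a b u v 0 = u + v := by
  simp [twoFrequencyCurve]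

theorem contDiff : ContDiff ℝ ∞ (twoFrequencyCurve a b u v) := by
  have hexp (z : ℂ) : ContDiff ℝ ∞ fun t : ℝ ↦ exp (z * t) :=
    (contDiff_const.mul ofRealCLM.contDiff).cexp
  exact ((hexp _).smul contDiff_const).add ((hexp _).smul contDiff_const)

theorem hasDerivAt (t : ℝ) :
    HasDerivAt (twoFrequencyCurve a b u v)
      (twoFrequencyCurve a b ((a * I) • u) ((b * I) • v) t) t := by
  have hexp (z : ℂ) : HasDerivAt (fun t : ℝ ↦ exp (z * t)) (exp (z * t) * z) t := by
    simpa using ((hasDerivAt_id t).ofReal_comp.const_mul z).cexp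
  simp only [twoFrequencyCurve, smul_smul]
  exact ((hexp _).smul_const u).add ((hexp _).smul_const v)

theorem deriv_eq :
    deriv (twoFrequencyCurve a b u v) =
      twoFrequencyCurve a b ((a * I) • u) ((b * I) • v) :=
  funext fun t ↦ (hasDerivAt a b u v t).deriv

theorem deriv_deriv_sub_add_eq_zero (t : ℝ) :
    deriv (deriv (twoFrequencyCurve a b u v)) t
      - (((a + b : ℝ) : ℂ) * I) • deriv (twoFrequencyCurve a b u v) t
      - ((a * b : ℝ) : ℂ) • twoFrequencyCurve a b u v t = 0 := by
  simp only [deriv_eq, twoFrequencyCurve]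
  push_cast
  match_scalars
  · linear_combination -exp (a * I * t) * a * b * I_sq
  · linear_combination -exp (b * I * t) * a * b * I_sq

theorem exists_norm_eq_one (t : ℝ) :
    ∃ z w : ℂ, ‖z‖ = 1 ∧ ‖w‖ = 1 ∧ twoFrequencyCurve a b u v t = z • u + w • v := by
  refine ⟨_, _, ?_, ?_, rfl⟩ <;> simp [norm_exp]

variable {u v} (huv : inner ℂ u v = 0)
include huv

theorem norm_sq_zero : ‖twoFrequencyCurve a b u v 0‖ ^ 2 = ‖u‖ ^ 2 + ‖v‖ ^ 2 := by
  simpa only [apply_zero, sq] using norm_add_sq_eq_norm_sq_add_norm_sq_of_inner_eq_zero u v huv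

theorem norm_sq_deriv_zero :
    ‖deriv (twoFrequencyCurve a b u v) 0‖ ^ 2 = a ^ 2 * ‖u‖ ^ 2 + b ^ 2 * ‖v‖ ^ 2 := by
  have hvel : inner ℂ (((a : ℂ) * I) • u) (((b : ℂ) * I) • v) = 0 := by
    rw [inner_smul_left, inner_smul_right, huv, mul_zero, mul_zero]
  rw [deriv_eq, norm_sq_zero a b hvel]
  simp [norm_smul, mul_pow]

theorem inner_deriv_zero :
    inner ℂ (deriv (twoFrequencyCurve a b u v) 0) (twoFrequencyCurve a b u v 0) =
      -((a * ‖u‖ ^ 2 + b * ‖v‖ ^ 2 : ℝ) * I) := by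
  have hvu : inner ℂ v u = 0 := inner_eq_zero_symm.mp huv
  simp only [deriv_eq, apply_zero, inner_add_left, inner_add_right, inner_smul_left, huv, hvu,
    inner_self_eq_norm_sq_to_K, coe_algebraMap, map_mul, conj_ofReal, conj_I]
  push_cast
  ring

variable {a b}

theorem isMagneticGeodesic {s ψ : ℝ} (hunit : ‖u‖ ^ 2 + ‖v‖ ^ 2 = 1) (hsum : a + b = s)
    (hprod : a * b = s * Real.cos ψ - 1) (hmean : a * ‖u‖ ^ 2 + b * ‖v‖ ^ 2 = Real.cos ψ) :
    IsMagneticGeodesic s ψ (twoFrequencyCurve a b u v) where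
  contDiff := contDiff a b u v
  equation t := by
    have hode := deriv_deriv_sub_add_eq_zero a b u v t
    rw [hsum, hprod, sub_eq_add_neg _ (_ • twoFrequencyCurve a b u v t), ← neg_smul] at hode
    simpa using hode
  norm_zero := by
    rw [← sq_eq_sq₀ (norm_nonneg _) zero_le_one, norm_sq_zero a b huv, hunit, one_pow]
  norm_deriv_zero := by
    rw [← sq_eq_sq₀ (norm_nonneg _) zero_le_one, norm_sq_deriv_zero a b huv]
    calc a ^ 2 * ‖u‖ ^ 2 + b ^ 2 * ‖v‖ ^ 2
        = (a + b) * (a * ‖u‖ ^ 2 + b * ‖v‖ ^ 2) - a * b * (‖u‖ ^ 2 + ‖v‖ ^ 2) := by ring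
      _ = 1 ^ 2 := by rw [hsum, hprod, hmean, hunit]; ring
  re_inner_deriv_zero := by
    rw [inner_deriv_zero a b huv, neg_re, re_ofReal_mul, I_re, mul_zero, neg_zero]
  re_inner_deriv_zero_I_smul := by
    rw [inner_smul_right, inner_deriv_zero a b huv, hmean, I_mul_re, neg_im, neg_neg,
      im_ofReal_mul, I_im, mul_one]

end twoFrequencyCurve

end TwoFrequencyCurve

theorem sq_div_four_add_one_sub_mul_cos (s ψ : ℝ) :
    s ^ 2 / 4 + 1 - s * Real.cos ψ = (-s / 2 + Real.cos ψ) ^ 2 + Real.sin ψ ^ 2 := by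
  rw [Real.sin_sq]
  ring

theorem normC_sq (s ψ : ℝ) : normC s ψ ^ 2 = s ^ 2 / 4 + 1 - s * Real.cos ψ := by
  refine Real.sq_sqrt ?_
  rw [sq_div_four_add_one_sub_mul_cos]
  positivity

theorem abs_le_normC (s ψ : ℝ) : |-s / 2 + Real.cos ψ| ≤ normC s ψ := by
  refine Real.abs_le_sqrt ?_
  rw [sq_div_four_add_one_sub_mul_cos]
  exact le_add_of_nonneg_right (sq_nonneg _)

theorem normC_mul_cos_argC (s ψ : ℝ) :
    normC s ψ * Real.cos (argC s ψ) = -s / 2 + Real.cos ψ := by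
  have hle := abs_le_normC s ψ
  have hnonneg : 0 ≤ normC s ψ := Real.sqrt_nonneg _
  have hquot : |(-s / 2 + Real.cos ψ) / normC s ψ| ≤ 1 := by
    rw [abs_div, abs_of_nonneg hnonneg]
    exact div_le_one_of_le₀ hle hnonneg
  rw [argC, Real.cos_arccos (abs_le.mp hquot).1 (abs_le.mp hquot).2]
  refine mul_div_cancel_of_imp' fun hzero ↦ ?_
  exact abs_nonpos_iff.mp (hzero ▸ hle)

theorem magCurve_eq_twoFrequencyCurve {n : ℕ} (s ψ : ℝ)
    (w₀ w₁ : EuclideanSpace ℂ (Fin (n + 1))) :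
    magCurve s ψ w₀ w₁ = twoFrequencyCurve (s / 2 - normC s ψ) (s / 2 + normC s ψ) w₀ w₁ := by
  funext t
  simp only [magCurve, twoFrequencyCurve, smul_add, smul_smul, ← Complex.exp_add]
  push_cast
  ring_nf

theorem IsMagneticGeodesic.isMagGeo {n : ℕ} {s ψ : ℝ}
    {γ : ℝ → EuclideanSpace ℂ (Fin (n + 1))} (hγ : IsMagneticGeodesic s ψ γ) :
    IsMagGeo s ψ γ :=
  ⟨hγ.contDiff, hγ.equation, hγ.norm_zero, hγ.norm_deriv_zero, hγ.re_inner_deriv_zero,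
    hγ.re_inner_deriv_zero_I_smul⟩

-- Multiplying the width condition through by `|C_s(ψ)|` avoids the quotient in `argC`, which has a
-- junk value when `C_s(ψ) = 0`.
theorem stmt_1_general {E : Type*} [NormedAddCommGroup E] [InnerProductSpace ℂ E] (s ψ : ℝ)
    (w₀ w₁ : E) (horth : inner ℂ w₀ w₁ = 0) (hunit : ‖w₀‖ ^ 2 + ‖w₁‖ ^ 2 = 1)
    (hwidth : normC s ψ * (‖w₁‖ ^ 2 - ‖w₀‖ ^ 2) = -s / 2 + Real.cos ψ) :
    IsMagneticGeodesic s ψ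
        (twoFrequencyCurve (s / 2 - normC s ψ) (s / 2 + normC s ψ) w₀ w₁) ∧
      ∀ t : ℝ, ∃ l₀ l₁ : ℂ, ‖l₀‖ = 1 ∧ ‖l₁‖ = 1 ∧
        twoFrequencyCurve (s / 2 - normC s ψ) (s / 2 + normC s ψ) w₀ w₁ t =
          l₀ • w₀ + l₁ • w₁ := by
  refine ⟨twoFrequencyCurve.isMagneticGeodesic horth hunit (by ring) ?_ ?_,
    twoFrequencyCurve.exists_norm_eq_one _ _ _ _⟩
  · linear_combination -normC_sq s ψ
  · linear_combination s / 2 * hunit + hwidth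

/-- for an admissible pair of width `Arg(C_s(ψ))`, the explicit curve
`magCurve s ψ w₀ w₁` is a unit-speed magnetic geodesic of strength `s` with contact
angle `ψ`, contained in the Clifford torus `𝕋²_{w₀,w₁}`. -/
theorem stmt_1 {n : ℕ} (s ψ : ℝ) (hs : 0 ≤ s) (hψ : ψ ∈ Set.Icc 0 π)
    (hne : (s, ψ) ≠ (2, 0))
    (w₀ w₁ : EuclideanSpace ℂ (Fin (n + 1)))
    (hadm : herm w₀ w₁ = 0 ∧ ‖w₀‖ ^ 2 + ‖w₁‖ ^ 2 = 1)
    (hwidth : ‖w₁‖ ^ 2 - ‖w₀‖ ^ 2 = Real.cos (argC s ψ)) :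
    IsMagGeo s ψ (magCurve s ψ w₀ w₁) ∧
      ∀ t : ℝ, magCurve s ψ w₀ w₁ t ∈ cliffordTorus w₀ w₁ := by
  obtain ⟨hgeo, htorus⟩ := stmt_1_general s ψ w₀ w₁ (inner_eq_zero_symm.mp hadm.1) hadm.2
    (hwidth ▸ normC_mul_cos_argC s ψ)
  exact magCurve_eq_twoFrequencyCurve s ψ w₀ w₁ ▸ ⟨hgeo.isMagGeo, htorus⟩
end
end

section
/- Let n ≥ 0, s > 2, and let q₀, q₁ be points on the unit sphere S^{2n+1} ⊂ ℂ^{n+1} with |⟨q₀, q₁⟩| < sqrt(1 − 4/s²). Then q₀ and q₁ are NOT connected by any unit-speed magnetic geodesic of strength s: for every ψ ∈ [0,π], every unit-speed magnetic geodesic γ of strength s with contact angle ψ, and all t₀, t₁ ∈ ℝ, it is impossible that γ(t₀) = q₀ and γ(t₁) = q₁. (Unit-speed strength s corresponds to kinetic energy k = 1/(2s²) < 1/8, and sqrt(1 − 4/s²) = sqrt(1 − 8k); this is the failure of the Hopf–Rinow property at subcritical energies.) -/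
noncomputable section

open scoped Real

/-!
A magnetic geodesic solves a linear second-order equation with characteristic roots `i a`, `i b`,
where `a + b = s` and `a b = s cos ψ - 1`; hence `γ t = e^{iat} u + e^{ibt} v`. The initial
conditions say exactly that `u ⟂ v`, `‖u‖² + ‖v‖² = 1` and `a ‖u‖² + b ‖v‖² = cos ψ`. Thus `γ`
runs in a Clifford torus, any two points of which have Hermitian product of modulus at least
`|‖u‖² - ‖v‖²| = |s - 2 cos ψ| / |a - b|`. The square of this ratio is
`(s - 2 cos ψ)² / (s² + 4 - 4 s cos ψ)`, which is minimal, with value `1 - 4 / s²`, at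
`cos ψ = 2 / s`.
-/

open Complex
open scoped InnerProductSpace

section LinearODE

variable {E : Type*} [NormedAddCommGroup E] [NormedSpace ℂ E]

theorem eq_exp_smul_of_hasDerivAt_smul {a : ℂ} {f : ℝ → E}
    (hf : ∀ t, HasDerivAt f (a • f t) t) (t : ℝ) : f t = exp (a * t) • f 0 := by
  have hexp (t : ℝ) : HasDerivAt (fun t : ℝ ↦ exp (-(a * t))) (exp (-(a * t)) * -a) t := by
    simpa using ((hasDerivAt_id (t : ℂ)).const_mul a).neg.cexp.comp_ofReal
  have hderiv (t : ℝ) : HasDerivAt (fun t : ℝ ↦ exp (-(a * t)) • f t) 0 t :=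
    ((hexp t).smul (hf t)).congr_deriv (by module)
  have hconst : exp (-(a * t)) • f t = f 0 := by
    simpa using is_const_of_deriv_eq_zero (fun t ↦ (hderiv t).differentiableAt)
      (fun t ↦ (hderiv t).deriv) t 0
  rw [← hconst, smul_smul, ← exp_add, add_neg_cancel, exp_zero, one_smul]

variable {a b : ℂ} {f : ℝ → E}

theorem deriv_sub_smul_eq_exp_smul (hf : Differentiable ℝ f) (hf' : Differentiable ℝ (deriv f))
    (hode : ∀ t, deriv (deriv f) t = (a + b) • deriv f t - (a * b) • f t) (t : ℝ) :
    deriv f t - b • f t = exp (a * t) • (deriv f 0 - b • f 0) := by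
  refine eq_exp_smul_of_hasDerivAt_smul (f := fun t ↦ deriv f t - b • f t) (fun t ↦ ?_) t
  refine ((hf' t).hasDerivAt.sub ((hf t).hasDerivAt.const_smul b)).congr_deriv ?_
  rw [hode]
  module

theorem exists_eq_exp_smul_add_exp_smul (hab : a ≠ b) (hf : Differentiable ℝ f)
    (hf' : Differentiable ℝ (deriv f))
    (hode : ∀ t, deriv (deriv f) t = (a + b) • deriv f t - (a * b) • f t) :
    ∃ u v : E, f 0 = u + v ∧ deriv f 0 = a • u + b • v ∧
      ∀ t : ℝ, f t = exp (a * t) • u + exp (b * t) • v := by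
  have hsub : a - b ≠ 0 := sub_ne_zero.mpr hab
  have hode' (t : ℝ) : deriv (deriv f) t = (b + a) • deriv f t - (b * a) • f t := by
    rw [hode, add_comm a, mul_comm a]
  refine ⟨(a - b)⁻¹ • (deriv f 0 - b • f 0), -(a - b)⁻¹ • (deriv f 0 - a • f 0), ?_, ?_,
    fun t ↦ ?_⟩
  · match_scalars <;> field_simp <;> ring
  · match_scalars <;> field_simp <;> ring
  · rw [smul_comm (exp (a * t)), smul_comm (exp (b * t)),
      ← deriv_sub_smul_eq_exp_smul hf hf' hode t, ← deriv_sub_smul_eq_exp_smul hf hf' hode' t]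
    match_scalars <;> field_simp <;> ring

end LinearODE

section InnerProduct

variable {E : Type*} [NormedAddCommGroup E] [InnerProductSpace ℂ E] {u v : E}

theorem abs_norm_sq_sub_norm_sq_le_norm_inner_of_inner_eq_zero (huv : ⟪u, v⟫_ℂ = 0)
    {k l k' l' : ℂ} (hk : ‖k‖ = 1) (hl : ‖l‖ = 1) (hk' : ‖k'‖ = 1) (hl' : ‖l'‖ = 1) :
    |‖u‖ ^ 2 - ‖v‖ ^ 2| ≤ ‖⟪k • u + l • v, k' • u + l' • v⟫_ℂ‖ := by
  have hvu : ⟪v, u⟫_ℂ = 0 := inner_eq_zero_symm.mp huv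
  have hinner : ⟪k • u + l • v, k' • u + l' • v⟫_ℂ =
      starRingEnd ℂ k * k' * ⟪u, u⟫_ℂ + starRingEnd ℂ l * l' * ⟪v, v⟫_ℂ := by
    simp only [inner_add_left, inner_add_right, inner_smul_left, inner_smul_right, huv, hvu]
    ring
  have hu : ‖starRingEnd ℂ k * k' * ⟪u, u⟫_ℂ‖ = ‖u‖ ^ 2 := by
    simp [inner_self_eq_norm_sq_to_K, hk, hk']
  have hv : ‖starRingEnd ℂ l * l' * ⟪v, v⟫_ℂ‖ = ‖v‖ ^ 2 := by
    simp [inner_self_eq_norm_sq_to_K, hl, hl']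
  rw [hinner, ← hu, ← hv, ← norm_neg (starRingEnd ℂ l * l' * _), ← sub_neg_eq_add]
  exact abs_norm_sub_norm_le _ _

theorem inner_eq_zero_of_inner_smul_add_smul {a b c : ℝ} (hab : a ≠ b)
    (hc : a * b = (a + b) * c - 1) (hx : ‖u + v‖ = 1) (hy : ‖(a * I) • u + (b * I) • v‖ = 1)
    (hxy : ⟪u + v, (a * I) • u + (b * I) • v⟫_ℂ = c * I) : ⟪u, v⟫_ℂ = 0 := by
  set x := u + v with hx_def
  set y := (a * I) • u + (b * I) • v with hy_def
  have hu : y - (b * I) • x = ((a - b) * I) • u := by rw [hx_def, hy_def]; module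
  have hv : y - (a * I) • x = ((b - a) * I) • v := by rw [hx_def, hy_def]; module
  have hxx : ⟪x, x⟫_ℂ = 1 := by simp [inner_self_eq_norm_sq_to_K, hx]
  have hyy : ⟪y, y⟫_ℂ = 1 := by simp [inner_self_eq_norm_sq_to_K, hy]
  have hyx : ⟪y, x⟫_ℂ = -(c * I) := by simp [← inner_conj_symm y x, hxy]
  have hc' : (a * b : ℂ) = (a + b) * c - 1 := mod_cast hc
  have hinner : ⟪y - (b * I) • x, y - (a * I) • x⟫_ℂ = 0 := by
    simp only [inner_sub_left, inner_sub_right, inner_smul_left, inner_smul_right, hxx, hyy, hxy,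
      hyx, map_mul, conj_I, conj_ofReal]
    linear_combination hc' + ((a + b) * c - a * b : ℂ) * I_mul_I
  have hab' : (a : ℂ) - b ≠ 0 := sub_ne_zero.mpr (mod_cast hab)
  have hba' : (b : ℂ) - a ≠ 0 := sub_ne_zero.mpr (mod_cast hab.symm)
  simpa [hu, hv, inner_smul_left, inner_smul_right, hab', hba'] using hinner

end InnerProduct

/-- Unit-speed magnetic geodesics of strength `s` on the unit sphere of an arbitrary complex inner
product space, in the ambient formulation of `IsMagGeo`. The parameter `c` is the cosine of the
contact angle. The two real conditions on the Hermitian product of `γ 0` and `γ' 0` are combined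
into `inner_deriv_zero`, for the Mathlib inner product (conjugate-linear in the first argument). -/
structure IsUnitSpeedMagneticGeodesic {E : Type*} [NormedAddCommGroup E] [InnerProductSpace ℂ E]
    (s c : ℝ) (γ : ℝ → E) : Prop where
  differentiable : Differentiable ℝ γ
  differentiable_deriv : Differentiable ℝ (deriv γ)
  deriv_deriv (t : ℝ) : deriv (deriv γ) t = (s * I) • deriv γ t - (1 - s * c : ℂ) • γ t
  norm_zero : ‖γ 0‖ = 1
  norm_deriv_zero : ‖deriv γ 0‖ = 1
  inner_deriv_zero : ⟪γ 0, deriv γ 0⟫_ℂ = c * I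

namespace IsUnitSpeedMagneticGeodesic

variable {E : Type*} [NormedAddCommGroup E] [InnerProductSpace ℂ E] {s c : ℝ} {γ : ℝ → E}

theorem abs_le_one (hγ : IsUnitSpeedMagneticGeodesic s c γ) : |c| ≤ 1 := by
  simpa [hγ.inner_deriv_zero, hγ.norm_zero, hγ.norm_deriv_zero] using
    norm_inner_le_norm (𝕜 := ℂ) (γ 0) (deriv γ 0)

theorem exists_orthogonal_decomposition (hγ : IsUnitSpeedMagneticGeodesic s c γ) {a b : ℝ}
    (hab : a ≠ b) (hadd : a + b = s) (hmul : a * b = s * c - 1) :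
    ∃ u v : E, ⟪u, v⟫_ℂ = 0 ∧ ‖u‖ ^ 2 + ‖v‖ ^ 2 = 1 ∧ a * ‖u‖ ^ 2 + b * ‖v‖ ^ 2 = c ∧
      ∀ t : ℝ, γ t = exp (a * I * t) • u + exp (b * I * t) • v := by
  have hne : (a * I : ℂ) ≠ b * I := by simpa using hab
  have hadd' : (s * I : ℂ) = a * I + b * I := by rw [← hadd]; push_cast; ring
  have hmul' : (1 - s * c : ℂ) = a * I * (b * I) := by
    have : (a * b : ℂ) = s * c - 1 := mod_cast hmul
    linear_combination this - (a * b : ℂ) * I_mul_I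
  obtain ⟨u, v, h₀, h₁, hγt⟩ := exists_eq_exp_smul_add_exp_smul hne hγ.differentiable
    hγ.differentiable_deriv fun t ↦ by rw [hγ.deriv_deriv, hadd', hmul']
  have hx := hγ.norm_zero
  have hxy := hγ.inner_deriv_zero
  have hy := hγ.norm_deriv_zero
  rw [h₁] at hxy hy
  rw [h₀] at hx hxy
  have huv : ⟪u, v⟫_ℂ = 0 :=
    inner_eq_zero_of_inner_smul_add_smul hab (by rw [hmul, hadd]) hx hy hxy
  refine ⟨u, v, huv, ?_, ?_, hγt⟩
  · simpa [hx, pow_two] using (norm_add_sq_eq_norm_sq_add_norm_sq_of_inner_eq_zero u v huv).symm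
  · have hc := congrArg im hxy
    simpa [inner_add_left, inner_add_right, inner_smul_right, huv, inner_eq_zero_symm.mp huv,
      inner_self_eq_norm_sq_to_K, ← ofReal_pow] using hc

theorem sq_sub_le_mul_norm_inner_sq (hγ : IsUnitSpeedMagneticGeodesic s c γ)
    (hpos : 0 < s ^ 2 + 4 - 4 * (s * c)) (t₀ t₁ : ℝ) :
    (s - 2 * c) ^ 2 ≤ (s ^ 2 + 4 - 4 * (s * c)) * ‖⟪γ t₀, γ t₁⟫_ℂ‖ ^ 2 := by
  set d := √(s ^ 2 + 4 - 4 * (s * c))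
  have hd : 0 < d := Real.sqrt_pos.mpr hpos
  have hd_sq : d ^ 2 = s ^ 2 + 4 - 4 * (s * c) := Real.sq_sqrt hpos.le
  obtain ⟨u, v, huv, hnorm, hmoment, hγt⟩ :=
    hγ.exists_orthogonal_decomposition (a := (s + d) / 2) (b := (s - d) / 2)
      (by linarith) (by ring) (by linear_combination -hd_sq / 4)
  have hgap : s - 2 * c = -(d * (‖u‖ ^ 2 - ‖v‖ ^ 2)) := by
    linear_combination 2 * hmoment - s * hnorm
  have hunit (a t : ℝ) : ‖exp (a * I * t)‖ = 1 := by simp [norm_exp]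
  have hle : |‖u‖ ^ 2 - ‖v‖ ^ 2| ≤ ‖⟪γ t₀, γ t₁⟫_ℂ‖ := by
    rw [hγt t₀, hγt t₁]
    exact abs_norm_sq_sub_norm_sq_le_norm_inner_of_inner_eq_zero huv (hunit _ _) (hunit _ _)
      (hunit _ _) (hunit _ _)
  rw [hgap, neg_sq, mul_pow, hd_sq, ← sq_abs (‖u‖ ^ 2 - ‖v‖ ^ 2)]
  gcongr

end IsUnitSpeedMagneticGeodesic

theorem IsMagGeo.isUnitSpeedMagneticGeodesic {n : ℕ} {s ψ : ℝ}
    {γ : ℝ → EuclideanSpace ℂ (Fin (n + 1))} (hγ : IsMagGeo s ψ γ) :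
    IsUnitSpeedMagneticGeodesic s (Real.cos ψ) γ := by
  obtain ⟨hsmooth, hode, hnorm, hspeed, hre, him⟩ := hγ
  have hdiff : Differentiable ℝ γ := hsmooth.differentiable (by simp)
  have hdiff' : Differentiable ℝ (deriv γ) :=
    (contDiff_infty_iff_deriv.mp hsmooth).2.differentiable (by simp)
  have hinner : ⟪γ 0, deriv γ 0⟫_ℂ = Real.cos ψ * I := by
    have hsymm : ⟪deriv γ 0, γ 0⟫_ℂ = -(Real.cos ψ * I) := by
      simp only [herm, inner_smul_right, I_mul_re] at hre him
      apply Complex.ext <;> simp only [hre, ← him] <;> simp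
    rw [← inner_conj_symm, hsymm, map_neg, map_mul, conj_ofReal, conj_I, mul_neg, neg_neg]
  have hode' (t : ℝ) : deriv (deriv γ) t =
      (s * I) • deriv γ t - (1 - s * Real.cos ψ : ℂ) • γ t := by
    rw [← sub_eq_zero, ← hode t]
    abel
  exact ⟨hdiff, hdiff', hode', hnorm, hspeed, hinner⟩

theorem one_sub_four_div_sq_mul_le_sq {s : ℝ} (hs : s ≠ 0) (c : ℝ) :
    (1 - 4 / s ^ 2) * (s ^ 2 + 4 - 4 * (s * c)) ≤ (s - 2 * c) ^ 2 := by
  have hdiff : (s - 2 * c) ^ 2 - (1 - 4 / s ^ 2) * (s ^ 2 + 4 - 4 * (s * c)) =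
      (2 * (s * c - 2) / s) ^ 2 := by
    field_simp
    ring
  rw [← sub_nonneg, hdiff]
  positivity

theorem stmt_8_general {E : Type*} [NormedAddCommGroup E] [InnerProductSpace ℂ E] {s c : ℝ}
    (hs : 2 < |s|) {γ : ℝ → E} (hγ : IsUnitSpeedMagneticGeodesic s c γ) (t₀ t₁ : ℝ) :
    √(1 - 4 / s ^ 2) ≤ ‖⟪γ t₀, γ t₁⟫_ℂ‖ := by
  have hs₀ : s ≠ 0 := abs_pos.mp (two_pos.trans hs)
  have hsc : s * c ≤ |s| :=
    (le_abs_self _).trans (by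
      simpa [abs_mul] using mul_le_mul_of_nonneg_left hγ.abs_le_one (abs_nonneg s))
  have hpos : 0 < s ^ 2 + 4 - 4 * (s * c) := by
    linarith [pow_pos (sub_pos.mpr hs) 2, sub_sq |s| 2, sq_abs s]
  refine Real.sqrt_le_iff.mpr ⟨norm_nonneg _, le_of_mul_le_mul_right ?_ hpos⟩
  calc (1 - 4 / s ^ 2) * (s ^ 2 + 4 - 4 * (s * c)) ≤ (s - 2 * c) ^ 2 :=
        one_sub_four_div_sq_mul_le_sq hs₀ c
    _ ≤ (s ^ 2 + 4 - 4 * (s * c)) * ‖⟪γ t₀, γ t₁⟫_ℂ‖ ^ 2 :=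
        hγ.sq_sub_le_mul_norm_inner_sq hpos t₀ t₁
    _ = ‖⟪γ t₀, γ t₁⟫_ℂ‖ ^ 2 * (s ^ 2 + 4 - 4 * (s * c)) := mul_comm _ _

/-- subcritical case `s > 2`, far points: if
`|⟨q₀,q₁⟩| < sqrt(1 − 4/s²)` then no unit-speed magnetic geodesic of strength `s`
connects `q₀` and `q₁`. -/
theorem stmt_8 {n : ℕ} (s : ℝ) (hs : 2 < s)
    (q₀ q₁ : EuclideanSpace ℂ (Fin (n + 1)))
    (hq₀ : ‖q₀‖ = 1) (hq₁ : ‖q₁‖ = 1)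
    (hclose : ‖herm q₀ q₁‖ < Real.sqrt (1 - 4 / s ^ 2)) :
    ∀ ψ ∈ Set.Icc (0 : ℝ) π, ∀ γ : ℝ → EuclideanSpace ℂ (Fin (n + 1)),
      IsMagGeo s ψ γ → ∀ t₀ t₁ : ℝ, ¬(γ t₀ = q₀ ∧ γ t₁ = q₁) := by
  rintro ψ - γ hγ t₀ t₁ ⟨rfl, rfl⟩
  exact (stmt_8_general (hs.trans_le (le_abs_self s)) hγ.isUnitSpeedMagneticGeodesic t₁ t₀).not_gt
    hclose
end
end
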